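/- arXiv:2001.08825 — 3 statements merged into one kernel-verified Lean document; each statement's English description precedes it below -/
import Mathlib

section
/- Let α ∈ (0,2), n ∈ ℕ (n ≥ 0), and x ∈ ℝ. Then the following two finite-sum expressions are equal: (Γ(1+α)/(ix+1)^(1+α)) · ∑_{k=0}^{n} C(n,k)·C(−1−α,k)·(2/(ix+1))^k = (Γ(1+α)/(ix+1)^(n+1+α)) · ∑_{l=0}^{n} C(n,l)·(ix)^(n−l)·H_α(l). (That is, the closed-form fractional Laplacian of μ_n can be expanded as a polynomial in ix times (ix+1)^(−n−1−α).) -/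
open MeasureTheory Finset

/-- The constant `c_α = α·2^(α−1)·Γ(1/2+α/2)/(√π·Γ(1−α/2))`. -/
noncomputable def cFrac (α : ℝ) : ℝ :=
  α * 2 ^ (α - 1) * Real.Gamma (1 / 2 + α / 2) / (Real.sqrt Real.pi * Real.Gamma (1 - α / 2))

/-- The complex Higgins function `λ_n(x) = ((ix−1)/(ix+1))^n`. -/
noncomputable def higgins (n : ℤ) (x : ℝ) : ℂ :=
  ((Complex.I * (x : ℂ) - 1) / (Complex.I * (x : ℂ) + 1)) ^ n

/-- The derivative `λ_n'`. -/
noncomputable def higgins' (n : ℤ) (x : ℝ) : ℂ := deriv (higgins n) x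

/-- The complex Christov function `μ_n(x) = (ix−1)^n/(ix+1)^(n+1)`. -/
noncomputable def christov (n : ℤ) (x : ℝ) : ℂ :=
  (Complex.I * (x : ℂ) - 1) ^ n / (Complex.I * (x : ℂ) + 1) ^ (n + 1)

/-- The derivative `μ_n'`. -/
noncomputable def christov' (n : ℤ) (x : ℝ) : ℂ := deriv (christov n) x

/-- Generalized binomial coefficient `C(z,k) = z(z−1)⋯(z−k+1)/k!` over `ℂ`. -/
noncomputable def gbinom (z : ℂ) (k : ℕ) : ℂ :=
  (∏ i ∈ Finset.range k, (z - (i : ℂ))) / (k.factorial : ℂ)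

/-- Generalized binomial coefficient `C(z,k) = z(z−1)⋯(z−k+1)/k!` over `ℝ`. -/
noncomputable def gbinomR (z : ℝ) (k : ℕ) : ℝ :=
  (∏ i ∈ Finset.range k, (z - (i : ℝ))) / (k.factorial : ℝ)

/-- Rising factorial (Pochhammer symbol) `(z)_k = z(z+1)⋯(z+k−1)` over `ℂ`. -/
noncomputable def poch (z : ℂ) (k : ℕ) : ℂ := ∏ i ∈ Finset.range k, (z + (i : ℂ))

/-- `G_α(l) = (1/(l+1))·∑_{k=0}^{l} C(l+1,k+1)·C(−1−α,k)·2^k = ₂F₁(−l, 1+α; 2; 2)`, over `ℂ`. -/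
noncomputable def Gc (α : ℝ) (l : ℕ) : ℂ :=
  (1 / ((l : ℂ) + 1)) * ∑ k ∈ Finset.range (l + 1),
    gbinom ((l : ℂ) + 1) (k + 1) * gbinom (-1 - (α : ℂ)) k * 2 ^ k

/-- `G_α(l) = (1/(l+1))·∑_{k=0}^{l} C(l+1,k+1)·C(−1−α,k)·2^k = ₂F₁(−l, 1+α; 2; 2)`, over `ℝ`. -/
noncomputable def GR (α : ℝ) (l : ℕ) : ℝ :=
  (1 / ((l : ℝ) + 1)) * ∑ k ∈ Finset.range (l + 1),
    gbinomR ((l : ℝ) + 1) (k + 1) * gbinomR (-1 - α) k * 2 ^ k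

/-- `H_α(l) = ∑_{k=0}^{l} C(l,k)·C(−1−α,k)·2^k = ₂F₁(−l, 1+α; 1; 2)`, over `ℂ`. -/
noncomputable def Hc (α : ℝ) (l : ℕ) : ℂ :=
  ∑ k ∈ Finset.range (l + 1), gbinom (l : ℂ) k * gbinom (-1 - (α : ℂ)) k * 2 ^ k

/-- `H_α(l) = ∑_{k=0}^{l} C(l,k)·C(−1−α,k)·2^k = ₂F₁(−l, 1+α; 1; 2)`, over `ℝ`. -/
noncomputable def HR (α : ℝ) (l : ℕ) : ℝ :=
  ∑ k ∈ Finset.range (l + 1), gbinomR (l : ℝ) k * gbinomR (-1 - α) k * 2 ^ k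

/-- `arccot(x) = π/2 − arctan(x) ∈ (0,π)`. -/
noncomputable def arccot (x : ℝ) : ℝ := Real.pi / 2 - Real.arctan x

/-!
With `b k = C(-1-α, k) 2 ^ k`, consider the Appell polynomials
`A_n(y) = ∑ k, C(n, k) b k y ^ (n - k)`. Then `H_α(l) = A_l(1)`, and pulling `y ^ n` out of the sum
shows that the left-hand side of the theorem is `A_n(ix + 1) / (ix + 1) ^ n` times
`Γ(1+α) / (ix + 1) ^ (1 + α)`. The theorem is therefore the addition formula
`A_n(y + z) = ∑ l, C(n, l) z ^ (n - l) A_l(y)` at `y = 1`, `z = ix`.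
-/

theorem map_add_algebraMap_pow {R A M : Type*} [CommSemiring R] [Semiring A] [Algebra R A]
    [AddCommMonoid M] [Module R M] (L : A →ₗ[R] M) (p : A) (w : R) (m : ℕ) :
    L ((p + algebraMap R A w) ^ m) =
      ∑ k ∈ range (m + 1), (m.choose k * w ^ (m - k)) • L (p ^ k) := by
  rw [(Algebra.commute_algebraMap_right w p).add_pow, map_sum]
  refine sum_congr rfl fun k _ ↦ ?_
  rw [← map_smul, mul_comm (m.choose k : R), Algebra.smul_def, Algebra.commutes,
    map_mul (algebraMap R A), map_pow, map_natCast, mul_assoc]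

section Appell

open Polynomial

variable {R : Type*}

/-- The value at `y` of the `n`-th Appell polynomial of the sequence `b`. The exponential
generating function in `n` is `(∑ k, b k * t ^ k / k!) * exp (y * t)`; the finite sum avoids
denominators, so that `R` can be any commutative semiring. It expresses the sums on both sides of
the Christov expansion. -/
def appell [CommSemiring R] (b : ℕ → R) (n : ℕ) (y : R) : R :=
  ∑ k ∈ range (n + 1), n.choose k * b k * y ^ (n - k)

theorem appell_one_right [CommSemiring R] (b : ℕ → R) (n : ℕ) :
    appell b n 1 = ∑ k ∈ range (n + 1), n.choose k * b k := by
  simp [appell]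

-- Umbral calculus: `A_n(y)` is the image of `(X + y) ^ n` under the linear functional
-- `X ^ k ↦ b k`, so the formula is the binomial expansion of `((X + y) + z) ^ n`.
theorem appell_add [CommSemiring R] (b : ℕ → R) (n : ℕ) (y z : R) :
    appell b n (y + z) = ∑ l ∈ range (n + 1), n.choose l * z ^ (n - l) * appell b l y := by
  let L : R[X] →ₗ[R] R := (basisMonomials R).constr R b
  have L_X_pow (k : ℕ) : L (X ^ k) = b k := by
    simpa [X_pow_eq_monomial] using (basisMonomials R).constr_basis R b k
  have L_X_add_C_pow (w : R) (m : ℕ) : L ((X + C w) ^ m) = appell b m w := by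
    simp only [← algebraMap_eq, map_add_algebraMap_pow, L_X_pow, appell, smul_eq_mul,
      mul_right_comm]
  calc
    appell b n (y + z) = L ((X + C y + C z) ^ n) := by rw [add_assoc, ← C_add, L_X_add_C_pow]
    _ = ∑ l ∈ range (n + 1), n.choose l * z ^ (n - l) * L ((X + C y) ^ l) :=
      map_add_algebraMap_pow L _ z n
    _ = ∑ l ∈ range (n + 1), n.choose l * z ^ (n - l) * appell b l y := by
      simp only [L_X_add_C_pow]

theorem appell_eq_pow_mul_sum [Semifield R] (b : ℕ → R) (n : ℕ) {y : R} (hy : y ≠ 0) :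
    appell b n y = y ^ n * ∑ k ∈ range (n + 1), n.choose k * b k / y ^ k := by
  rw [appell, mul_sum]
  refine sum_congr rfl fun k hk ↦ ?_
  rw [pow_sub₀ y hy (mem_range_succ_iff.mp hk)]
  ring

end Appell

theorem gbinom_natCast (n k : ℕ) : gbinom n k = n.choose k := by
  rw [gbinom, ← descPochhammer_eval_eq_prod_range, Nat.cast_choose_eq_descPochhammer_div]

theorem fracLap_christov_expansion_general (c a : ℂ) {z : ℂ} (hz : z + 1 ≠ 0) (n : ℕ) :
    c / (z + 1) ^ (1 + a) *
        ∑ k ∈ range (n + 1), gbinom n k * gbinom (-1 - a) k * (2 / (z + 1)) ^ k =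
      c / (z + 1) ^ (n + 1 + a) *
        ∑ l ∈ range (n + 1), gbinom n l * z ^ (n - l) *
          ∑ k ∈ range (l + 1), gbinom l k * gbinom (-1 - a) k * 2 ^ k := by
  let b (k : ℕ) : ℂ := gbinom (-1 - a) k * 2 ^ k
  have cpow_exponent : (z + 1) ^ (n + 1 + a) = (z + 1) ^ n * (z + 1) ^ (1 + a) := by
    rw [add_assoc, Complex.cpow_add _ _ hz, Complex.cpow_natCast]
  have left_sum : (z + 1) ^ n *
      ∑ k ∈ range (n + 1), gbinom n k * gbinom (-1 - a) k * (2 / (z + 1)) ^ k =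
        appell b n (z + 1) := by
    simp only [appell_eq_pow_mul_sum b n hz, b, gbinom_natCast, div_pow, mul_div_assoc, mul_assoc]
  have inner_sum (l : ℕ) :
      ∑ k ∈ range (l + 1), gbinom l k * gbinom (-1 - a) k * 2 ^ k = appell b l 1 := by
    simp only [appell_one_right, b, gbinom_natCast, mul_assoc]
  have right_sum : ∑ l ∈ range (n + 1), gbinom n l * z ^ (n - l) *
      ∑ k ∈ range (l + 1), gbinom l k * gbinom (-1 - a) k * 2 ^ k = appell b n (z + 1) := by
    simp_rw [inner_sum, gbinom_natCast, add_comm z 1, appell_add]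
  rw [right_sum, ← left_sum, cpow_exponent]
  field_simp

theorem I_mul_ofReal_add_one_ne_zero (x : ℝ) : Complex.I * x + 1 ≠ 0 :=
  fun h ↦ by simpa using congrArg Complex.re h

theorem fracLap_christov_expansion (α : ℝ) (hα : α ∈ Set.Ioo (0 : ℝ) 2) (n : ℕ) (x : ℝ) :
    ((Real.Gamma (1 + α) : ℂ) / (Complex.I * (x : ℂ) + 1) ^ ((1 : ℂ) + (α : ℂ))) *
        ∑ k ∈ Finset.range (n + 1),
          gbinom (n : ℂ) k * gbinom (-1 - (α : ℂ)) k * (2 / (Complex.I * (x : ℂ) + 1)) ^ k =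
      ((Real.Gamma (1 + α) : ℂ) /
            (Complex.I * (x : ℂ) + 1) ^ ((n : ℂ) + 1 + (α : ℂ))) *
        ∑ l ∈ Finset.range (n + 1),
          gbinom (n : ℂ) l * (Complex.I * (x : ℂ)) ^ (n - l) * Hc α l :=
  fracLap_christov_expansion_general (Real.Gamma (1 + α)) α (I_mul_ofReal_add_one_ne_zero x) n
end

section
/- Let α ∈ (0,2), n ∈ ℕ (n ≥ 0), and x ∈ ℝ. Define CC_{2n}(x) = Re μ_n(x) (the cosine-like Christov function). Then y ↦ (CC_{2n}'(x−y) − CC_{2n}'(x+y))·y^(−α) is absolutely integrable on (0,∞), and (c_α/α)·∫₀^∞ (CC_{2n}'(x−y) − CC_{2n}'(x+y))·y^(−α) dy = (Γ(1+α)/(1+x²)^((n+1+α)/2))·sin((n+1+α)·arccot(x) − πα/2)·∑_{l≥0, 2l≤n} (−1)^l·C(n,2l)·x^(n−2l)·H_α(2l) − (Γ(1+α)/(1+x²)^((n+1+α)/2))·cos((n+1+α)·arccot(x) − πα/2)·∑_{l≥0, 2l+1≤n} (−1)^l·C(n,2l+1)·x^(n−1−2l)·H_α(2l+1). -/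
open MeasureTheory Finset

/-- The cosine-like Christov function `CC_{2n}(x) = Re μ_n(x)`. -/
noncomputable def CC (n : ℕ) (x : ℝ) : ℝ := (christov (n : ℤ) x).re

/-- The derivative `CC_{2n}'`. -/
noncomputable def CC' (n : ℕ) (x : ℝ) : ℝ := deriv (CC n) x

/-!
The function `μ_n` is a linear combination of the powers `(1 + ix)^(-(k+1))`, and each of these is,
by the Gamma integral, a half-line Fourier transform `∫ e^{-itx} g(t) dt` with `g(t) = t^k e^{-t}`.

On a Fourier transform, `(−Δ)^(α/2)` is multiplication of `g` by `|t|^α`: integrating by parts turns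
`u'(x - y) - u'(x + y)` into the second difference `2 u(x) - u(x - y) - u(x + y)`, whose transform
carries the factor `2 (1 - cos (t y))`, and Fubini's theorem together with scaling in `y` extracts
`|t|^α` times a constant depending only on `α`. That constant is identified with `α / c_α` by
testing the identity on a Gaussian, so no oscillatory integral has to be evaluated.

Hence each power contributes a Gamma quotient times `(1 + ix)^(-(k+1+α))`. Factoring out
`(1 + ix)^(-(n+1+α))` and expanding the remaining powers of `1 + ix` collects the coefficients into
the numbers `H_α(l)`. Finally `1 + ix` has argument `arctan x = π/2 - arccot x`, and the real part
separates the terms with even and odd `l`.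
-/

section WeightedIntegrals

open Filter Topology

theorem integrableOn_Ioi_zero_of_norm_le_rpow {E : Type*} [NormedAddCommGroup E] {g : ℝ → E}
    {A p : ℝ} (hp : -1 < p) (hg : AEStronglyMeasurable g (volume.restrict (Set.Ioi 0)))
    (h_zero : ∀ y > 0, ‖g y‖ ≤ A * y ^ p) (h_top : IntegrableOn g (Set.Ioi 1)) :
    IntegrableOn g (Set.Ioi 0) := by
  rw [← Set.Ioc_union_Ioi_eq_Ioi (zero_le_one' ℝ)]
  refine IntegrableOn.union ?_ h_top
  have h_pow : IntegrableOn (fun y : ℝ ↦ y ^ p) (Set.Ioc 0 1) :=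
    (intervalIntegrable_iff_integrableOn_Ioc_of_le zero_le_one).1
      (intervalIntegral.intervalIntegrable_rpow' hp)
  exact (h_pow.const_mul A).mono' (hg.mono_set Set.Ioc_subset_Ioi_self)
    (ae_restrict_of_forall_mem measurableSet_Ioc fun y hy ↦ h_zero y hy.1)

variable {E : Type*} [NormedAddCommGroup E] [NormedSpace ℝ E] {F f : ℝ → E} {α A B : ℝ}

theorem aestronglyMeasurable_rpow_smul {s : Set ℝ} (p : ℝ)
    (hf : AEStronglyMeasurable f (volume.restrict s)) :
    AEStronglyMeasurable (fun y ↦ y ^ p • f y) (volume.restrict s) :=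
  (measurable_id.pow_const p).aestronglyMeasurable.smul hf

theorem integrableOn_rpow_smul_of_norm_le_sq (hα0 : 0 < α) (hα2 : α < 2)
    (hF : AEStronglyMeasurable F (volume.restrict (Set.Ioi 0)))
    (hA : ∀ y > 0, ‖F y‖ ≤ A * y ^ 2) (hB : ∀ y > 0, ‖F y‖ ≤ B) :
    IntegrableOn (fun y ↦ y ^ (-1 - α) • F y) (Set.Ioi 0) := by
  have hm := aestronglyMeasurable_rpow_smul (-1 - α) hF
  refine integrableOn_Ioi_zero_of_norm_le_rpow (A := A) (p := 1 - α) (by linarith) hm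
    (fun y hy ↦ ?_) ?_
  · rw [norm_smul, Real.norm_of_nonneg (by positivity)]
    calc y ^ (-1 - α) * ‖F y‖ ≤ y ^ (-1 - α) * (A * y ^ 2) := by gcongr; exact hA y hy
      _ = A * (y ^ (-1 - α) * y ^ (2 : ℝ)) := by rw [Real.rpow_two]; ring
      _ = A * y ^ (1 - α) := by rw [← Real.rpow_add hy]; ring_nf
  · have h_pow : IntegrableOn (fun y : ℝ ↦ y ^ (-1 - α)) (Set.Ioi 1) :=
      integrableOn_Ioi_rpow_of_lt (by linarith) one_pos
    refine (h_pow.const_mul B).mono' (hm.mono_set (Set.Ioi_subset_Ioi zero_le_one))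
      (ae_restrict_of_forall_mem measurableSet_Ioi fun y (hy : 1 < y) ↦ ?_)
    have hy0 : 0 < y := one_pos.trans hy
    rw [norm_smul, Real.norm_of_nonneg (by positivity), mul_comm]
    gcongr
    exact hB y hy0

theorem integrableOn_rpow_smul_of_norm_le_mul (hα0 : 0 < α) (hα2 : α < 2)
    (hf : IntegrableOn f (Set.Ioi 0)) (hA : ∀ y > 0, ‖f y‖ ≤ A * y) :
    IntegrableOn (fun y ↦ y ^ (-α) • f y) (Set.Ioi 0) := by
  have hm := aestronglyMeasurable_rpow_smul (-α) hf.aestronglyMeasurable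
  refine integrableOn_Ioi_zero_of_norm_le_rpow (A := A) (p := 1 - α) (by linarith) hm
    (fun y hy ↦ ?_) ?_
  · rw [norm_smul, Real.norm_of_nonneg (by positivity)]
    calc y ^ (-α) * ‖f y‖ ≤ y ^ (-α) * (A * y) := by gcongr; exact hA y hy
      _ = A * (y ^ (-α) * y ^ (1 : ℝ)) := by rw [Real.rpow_one]; ring
      _ = A * y ^ (1 - α) := by rw [← Real.rpow_add hy]; ring_nf
  · have h_sub := Set.Ioi_subset_Ioi (zero_le_one' ℝ)
    refine Integrable.mono (hf.mono_set h_sub) (hm.mono_set h_sub)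
      (ae_restrict_of_forall_mem measurableSet_Ioi fun y (hy : 1 < y) ↦ ?_)
    rw [norm_smul, Real.norm_of_nonneg (by positivity)]
    exact mul_le_of_le_one_left (norm_nonneg _)
      (Real.rpow_le_one_of_one_le_of_nonpos hy.le (by linarith))

theorem norm_le_mul_sq_of_hasDerivAt (hF : ∀ y, HasDerivAt F (f y) y) (hF0 : F 0 = 0)
    (hA : ∀ y ≥ 0, ‖f y‖ ≤ A * y) {y : ℝ} (hy : 0 < y) : ‖F y‖ ≤ A * y ^ 2 := by
  have hA0 : 0 ≤ A := nonneg_of_mul_nonneg_left ((norm_nonneg _).trans (hA y hy.le)) hy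
  have h_bound (t : ℝ) (ht : t ∈ Set.Icc 0 y) : ‖f t‖ ≤ A * y :=
    (hA t ht.1).trans (mul_le_mul_of_nonneg_left ht.2 hA0)
  have h_mvt := (convex_Icc 0 y).norm_image_sub_le_of_norm_hasDerivWithin_le
    (fun t _ ↦ (hF t).hasDerivWithinAt) h_bound ⟨le_rfl, hy.le⟩ ⟨hy.le, le_rfl⟩
  rwa [hF0, sub_zero, sub_zero, Real.norm_of_nonneg hy.le, mul_assoc, ← sq] at h_mvt

theorem norm_le_integral_norm_of_hasDerivAt [CompleteSpace E] (hF : ∀ y, HasDerivAt F (f y) y)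
    (hF0 : F 0 = 0) (hf : IntegrableOn f (Set.Ioi 0)) {y : ℝ} (hy : 0 ≤ y) :
    ‖F y‖ ≤ ∫ t in Set.Ioi 0, ‖f t‖ := by
  have h_ftc : ∫ t in Set.Ioc 0 y, f t = F y := by
    rw [← intervalIntegral.integral_of_le hy, intervalIntegral.integral_eq_sub_of_hasDerivAt
      (fun t _ ↦ hF t) ((intervalIntegrable_iff_integrableOn_Ioc_of_le hy).2
        (hf.mono_set Set.Ioc_subset_Ioi_self)), hF0, sub_zero]
  calc ‖F y‖ = ‖∫ t in Set.Ioc 0 y, f t‖ := by rw [h_ftc]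
    _ ≤ ∫ t in Set.Ioc 0 y, ‖f t‖ := norm_integral_le_integral_norm _
    _ ≤ ∫ t in Set.Ioi 0, ‖f t‖ := setIntegral_mono_set hf.norm
      (ae_of_all _ fun _ ↦ norm_nonneg _) Set.Ioc_subset_Ioi_self.eventuallyLE

theorem continuousWithinAt_rpow_smul_of_norm_le_sq (hα2 : α < 2) (hF0 : F 0 = 0)
    (hA : ∀ y > 0, ‖F y‖ ≤ A * y ^ 2) :
    ContinuousWithinAt (fun y ↦ y ^ (-α) • F y) (Set.Ici 0) 0 := by
  have h_pow : ContinuousAt (fun y : ℝ ↦ A * y ^ (2 - α)) 0 :=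
    (Real.continuousAt_rpow_const 0 (2 - α) (.inr (by linarith))).const_mul A
  rw [← continuousWithinAt_Ioi_iff_Ici, ContinuousWithinAt, hF0, smul_zero]
  refine squeeze_zero_norm' ?_ (by
    simpa [Real.zero_rpow (by linarith : 2 - α ≠ 0)] using
      h_pow.tendsto.mono_left nhdsWithin_le_nhds)
  filter_upwards [self_mem_nhdsWithin] with y (hy : 0 < y)
  rw [norm_smul, Real.norm_of_nonneg (by positivity)]
  calc y ^ (-α) * ‖F y‖ ≤ y ^ (-α) * (A * y ^ 2) := by gcongr; exact hA y hy
    _ = A * (y ^ (-α) * y ^ (2 : ℝ)) := by rw [Real.rpow_two]; ring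
    _ = A * y ^ (2 - α) := by rw [← Real.rpow_add hy]; ring_nf

theorem tendsto_rpow_smul_atTop_of_norm_le (hα0 : 0 < α) (hB : ∀ y > 0, ‖F y‖ ≤ B) :
    Tendsto (fun y ↦ y ^ (-α) • F y) atTop (𝓝 0) := by
  refine squeeze_zero_norm' ?_ (by simpa using (tendsto_rpow_neg_atTop hα0).mul_const B)
  filter_upwards [eventually_gt_atTop 0] with y hy
  rw [norm_smul, Real.norm_of_nonneg (by positivity)]
  gcongr
  exact hB y hy

theorem integral_rpow_smul_deriv [CompleteSpace E] (hα0 : 0 < α) (hα2 : α < 2)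
    (hF : ∀ y, HasDerivAt F (f y) y) (hF0 : F 0 = 0) (hf : IntegrableOn f (Set.Ioi 0))
    (hA : ∀ y ≥ 0, ‖f y‖ ≤ A * y) :
    ∫ y in Set.Ioi 0, y ^ (-α) • f y = α • ∫ y in Set.Ioi 0, y ^ (-1 - α) • F y := by
  have hF_sq (y : ℝ) (hy : y > 0) := norm_le_mul_sq_of_hasDerivAt hF hF0 hA hy
  have hF_bdd (y : ℝ) (hy : y > 0) := norm_le_integral_norm_of_hasDerivAt hF hF0 hf hy.le
  have hF_meas : AEStronglyMeasurable F (volume.restrict (Set.Ioi 0)) :=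
    (continuous_iff_continuousAt.2 fun y ↦ (hF y).continuousAt).aestronglyMeasurable
  have hf_int := integrableOn_rpow_smul_of_norm_le_mul hα0 hα2 hf fun y hy ↦ hA y hy.le
  have hF_int := integrableOn_rpow_smul_of_norm_le_sq hα0 hα2 hF_meas hF_sq hF_bdd
  have h_deriv (y : ℝ) (hy : y ∈ Set.Ioi 0) : HasDerivAt (fun y ↦ y ^ (-α) • F y)
      (y ^ (-α) • f y + -α • y ^ (-1 - α) • F y) y := by
    have := (Real.hasDerivAt_rpow_const (p := -α) (.inl (ne_of_gt hy))).smul (hF y)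
    rwa [smul_smul, show -1 - α = -α - 1 by ring]
  have h_ftc := integral_Ioi_of_hasDerivAt_of_tendsto
    (continuousWithinAt_rpow_smul_of_norm_le_sq hα2 hF0 hF_sq) h_deriv
    (hf_int.add (hF_int.smul (-α))) (tendsto_rpow_smul_atTop_of_norm_le hα0 hF_bdd)
  rw [hF0, smul_zero, sub_zero] at h_ftc
  have h_sum := (integral_add hf_int (hF_int.smul (-α))).symm.trans h_ftc
  rw [Pi.smul_def, integral_smul, neg_smul, ← sub_eq_add_neg] at h_sum
  exact sub_eq_zero.1 h_sum

end WeightedIntegrals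

section FracLap

variable {E F : Type*} [NormedAddCommGroup E] [NormedSpace ℝ E] [NormedAddCommGroup F]
  [NormedSpace ℝ F] {α x : ℝ}

/-- `HasFracLapAt α u v x` says that `(−Δ)^(α/2) u (x)` exists and equals `v`. Differentiability and
integrability are part of the definition, so that neither `deriv` nor the integral takes its junk
value. -/
structure HasFracLapAt (α : ℝ) (u : ℝ → E) (v : E) (x : ℝ) : Prop where
  differentiable : Differentiable ℝ u
  integrableOn :
    IntegrableOn (fun y : ℝ ↦ y ^ (-α) • (deriv u (x - y) - deriv u (x + y))) (Set.Ioi 0)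
  integral_eq :
    (cFrac α / α) • ∫ y in Set.Ioi 0, y ^ (-α) • (deriv u (x - y) - deriv u (x + y)) = v

namespace HasFracLapAt

theorem clm_comp [CompleteSpace E] [CompleteSpace F] {u : ℝ → E} {v : E} (h : HasFracLapAt α u v x)
    (L : E →L[ℝ] F) :
    HasFracLapAt α (fun s ↦ L (u s)) (L v) x := by
  have h_deriv (s : ℝ) : deriv (fun s ↦ L (u s)) s = L (deriv u s) :=
    (L.hasFDerivAt.comp_hasDerivAt s (h.differentiable s).hasDerivAt).deriv
  have h_integrand : (fun y : ℝ ↦ y ^ (-α) • (deriv (fun s ↦ L (u s)) (x - y) -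
      deriv (fun s ↦ L (u s)) (x + y))) =
      fun y ↦ L (y ^ (-α) • (deriv u (x - y) - deriv u (x + y))) := by
    simp only [h_deriv, map_smul, map_sub]
  refine ⟨L.differentiable.comp h.differentiable, ?_, ?_⟩
  · rw [h_integrand]
    exact L.integrable_comp h.integrableOn
  · rw [h_integrand, L.integral_comp_comm h.integrableOn, ← map_smul, h.integral_eq]

theorem fun_sum {ι : Type*} {s : Finset ι} {u : ι → ℝ → E} {v : ι → E}
    (h : ∀ i ∈ s, HasFracLapAt α (u i) (v i) x) :
    HasFracLapAt α (fun t ↦ ∑ i ∈ s, u i t) (∑ i ∈ s, v i) x := by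
  have h_integrand : (fun y : ℝ ↦ y ^ (-α) • (deriv (fun t ↦ ∑ i ∈ s, u i t) (x - y) -
      deriv (fun t ↦ ∑ i ∈ s, u i t) (x + y))) =
      fun y ↦ ∑ i ∈ s, y ^ (-α) • (deriv (u i) (x - y) - deriv (u i) (x + y)) := by
    ext y
    rw [deriv_fun_sum fun i hi ↦ (h i hi).differentiable _,
      deriv_fun_sum fun i hi ↦ (h i hi).differentiable _, ← sum_sub_distrib, smul_sum]
  refine ⟨.fun_sum fun i hi ↦ (h i hi).differentiable, ?_, ?_⟩
  · rw [h_integrand]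
    exact integrable_finsetSum _ fun i hi ↦ (h i hi).integrableOn
  · rw [h_integrand, integral_finsetSum _ fun i hi ↦ (h i hi).integrableOn, smul_sum]
    exact sum_congr rfl fun i hi ↦ (h i hi).integral_eq

theorem const_mul {u : ℝ → ℂ} {v : ℂ} (h : HasFracLapAt α u v x) (c : ℂ) :
    HasFracLapAt α (fun s ↦ c * u s) (c * v) x :=
  h.clm_comp (ContinuousLinearMap.mul ℝ ℂ c)

end HasFracLapAt

end FracLap

section OneSubCos

variable {α : ℝ}

/-- The integral `∫₀^∞ (1 − cos y) y^(−1−α) dy`. By scaling, the corresponding integral at frequency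
`t` is `|t|^α` times it, which is where the symbol of the fractional Laplacian comes from. -/
noncomputable def oneSubCosMoment (α : ℝ) : ℝ :=
  ∫ y in Set.Ioi (0 : ℝ), y ^ (-1 - α) * (1 - Real.cos y)

theorem integrableOn_rpow_mul_one_sub_cos (hα0 : 0 < α) (hα2 : α < 2) (t : ℝ) :
    IntegrableOn (fun y : ℝ ↦ y ^ (-1 - α) * (1 - Real.cos (t * y))) (Set.Ioi 0) := by
  have h_norm (y : ℝ) : ‖1 - Real.cos (t * y)‖ = 1 - Real.cos (t * y) :=
    Real.norm_of_nonneg (sub_nonneg.2 (Real.cos_le_one _))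
  refine integrableOn_rpow_smul_of_norm_le_sq (F := fun y ↦ 1 - Real.cos (t * y)) (A := t ^ 2 / 2)
    (B := 2) hα0 hα2 (by fun_prop) (fun y _ ↦ ?_) (fun y _ ↦ ?_)
  · rw [h_norm]
    linarith [Real.one_sub_sq_div_two_le_cos (x := t * y)]
  · rw [h_norm]
    linarith [Real.neg_one_le_cos (t * y)]

theorem integral_rpow_mul_one_sub_cos (hα0 : 0 < α) (t : ℝ) :
    ∫ y in Set.Ioi (0 : ℝ), y ^ (-1 - α) * (1 - Real.cos (t * y)) =
      |t| ^ α * oneSubCosMoment α := by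
  rcases eq_or_ne t 0 with rfl | ht
  · simp [Real.zero_rpow hα0.ne']
  have ht' : 0 < |t| := abs_pos.2 ht
  have h_scale : ∀ y ∈ Set.Ioi (0 : ℝ), y ^ (-1 - α) * (1 - Real.cos (t * y)) =
      |t| ^ (1 + α) * ((|t| * y) ^ (-1 - α) * (1 - Real.cos (|t| * y))) := fun y hy ↦ by
    have h_pow : |t| ^ (1 + α) * |t| ^ (-1 - α) = 1 := by
      rw [← Real.rpow_add ht', show 1 + α + (-1 - α) = 0 by ring, Real.rpow_zero]
    have h_cos : Real.cos (|t| * y) = Real.cos (t * y) := by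
      rw [← Real.cos_abs (t * y), abs_mul, abs_of_pos (Set.mem_Ioi.1 hy)]
    rw [Real.mul_rpow ht'.le (le_of_lt hy), h_cos]
    linear_combination -(y ^ (-1 - α) * (1 - Real.cos (t * y))) * h_pow
  rw [setIntegral_congr_fun measurableSet_Ioi h_scale, integral_const_mul,
    integral_comp_mul_left_Ioi (fun y ↦ y ^ (-1 - α) * (1 - Real.cos y)) 0 ht', mul_zero,
    smul_eq_mul, oneSubCosMoment, Real.rpow_add ht', Real.rpow_one]
  field_simp

theorem integrable_rpow_mul_one_sub_cos_smul_prod {E : Type*} [NormedAddCommGroup E]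
    [NormedSpace ℝ E] {μ : Measure ℝ} [SFinite μ] {h : ℝ → E} (hα0 : 0 < α) (hα2 : α < 2)
    (h_meas : AEStronglyMeasurable h μ) (h_int : Integrable (fun t ↦ |t| ^ α • h t) μ) :
    Integrable (fun p : ℝ × ℝ ↦ (p.2 ^ (-1 - α) * (1 - Real.cos (p.1 * p.2))) • h p.1)
      (μ.prod (volume.restrict (Set.Ioi 0))) := by
  refine (integrable_prod_iff ?_).2 ⟨?_, ?_⟩
  · exact Measurable.aestronglyMeasurable (by fun_prop) |>.smul h_meas.comp_fst
  · exact ae_of_all _ fun t ↦ (integrableOn_rpow_mul_one_sub_cos hα0 hα2 t).smul_const (h t)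
  · have h_norm (t : ℝ) :
        ∫ y in Set.Ioi (0 : ℝ), ‖(y ^ (-1 - α) * (1 - Real.cos (t * y))) • h t‖ =
          oneSubCosMoment α * ‖|t| ^ α • h t‖ := by
      rw [norm_smul, Real.norm_of_nonneg (by positivity), ← mul_assoc, mul_comm (oneSubCosMoment α),
        ← integral_rpow_mul_one_sub_cos hα0, ← integral_mul_const]
      refine setIntegral_congr_fun measurableSet_Ioi fun y hy ↦ ?_
      have := Real.cos_le_one (t * y)
      rw [norm_smul, Real.norm_of_nonneg
        (mul_nonneg (Real.rpow_nonneg (le_of_lt hy) _) (by linarith))]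
    simpa only [h_norm] using h_int.norm.const_mul (oneSubCosMoment α)

theorem integral_rpow_smul_integral_one_sub_cos_smul {E : Type*} [NormedAddCommGroup E]
    [NormedSpace ℝ E] [CompleteSpace E] {μ : Measure ℝ} [SFinite μ] {h : ℝ → E}
    (hα0 : 0 < α) (hα2 : α < 2)
    (h_meas : AEStronglyMeasurable h μ) (h_int : Integrable (fun t ↦ |t| ^ α • h t) μ) :
    ∫ y in Set.Ioi (0 : ℝ), y ^ (-1 - α) • ∫ t, (1 - Real.cos (t * y)) • h t ∂μ =
      oneSubCosMoment α • ∫ t, |t| ^ α • h t ∂μ := by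
  simp_rw [← integral_smul, smul_smul]
  rw [← integral_integral_swap (integrable_rpow_mul_one_sub_cos_smul_prod hα0 hα2 h_meas h_int)]
  refine integral_congr_ae (ae_of_all _ fun t ↦ ?_)
  simp only
  rw [integral_smul_const, integral_rpow_mul_one_sub_cos hα0, mul_comm]

end OneSubCos

section AngularFourier

open Complex

variable {μ : Measure ℝ} {g : ℝ → ℂ} {α : ℝ}

/-- The Fourier transform `x ↦ ∫ e^{−itx} g(t) dμ(t)` of the complex measure `g μ`, with angular
frequency `t`. -/
noncomputable def angularFourier (μ : Measure ℝ) (g : ℝ → ℂ) (x : ℝ) : ℂ :=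
  ∫ t, cexp (-(I * t * x)) * g t ∂μ

theorem norm_cexp_neg_I_mul_mul (t x : ℝ) : ‖cexp (-(I * t * x))‖ = 1 := by
  simp [Complex.norm_exp]

theorem integrable_cexp_mul (hg : Integrable g μ) (x : ℝ) :
    Integrable (fun t : ℝ ↦ cexp (-(I * t * x)) * g t) μ :=
  hg.bdd_mul (c := 1) (by fun_prop) (ae_of_all _ fun t ↦ (norm_cexp_neg_I_mul_mul t x).le)

theorem integrable_abs_rpow_smul {p : ℝ} (hp0 : 0 ≤ p) (hp2 : p ≤ 2) (hg : Integrable g μ)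
    (hg2 : Integrable (fun t ↦ t ^ 2 • g t) μ) : Integrable (fun t ↦ |t| ^ p • g t) μ := by
  have h_meas : Measurable fun t : ℝ ↦ |t| ^ p := by fun_prop
  refine (hg.norm.add hg2.norm).mono' (h_meas.aestronglyMeasurable.smul hg.1)
    (ae_of_all _ fun t ↦ ?_)
  have h_pow : |t| ^ p ≤ 1 + t ^ 2 := by
    rcases le_total |t| 1 with h | h
    · exact (Real.rpow_le_one (abs_nonneg t) h hp0).trans (by linarith [sq_nonneg t])
    · calc |t| ^ p ≤ |t| ^ (2 : ℝ) := Real.rpow_le_rpow_of_exponent_le h hp2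
        _ = t ^ 2 := by rw [Real.rpow_two, sq_abs]
        _ ≤ 1 + t ^ 2 := by linarith
  calc ‖|t| ^ p • g t‖ = |t| ^ p * ‖g t‖ := by
        rw [norm_smul, Real.norm_of_nonneg (by positivity)]
    _ ≤ (1 + t ^ 2) * ‖g t‖ := by gcongr
    _ = ‖g t‖ + ‖t ^ 2 • g t‖ := by
        rw [norm_smul, Real.norm_of_nonneg (sq_nonneg t)]; ring

theorem hasDerivAt_angularFourier (hg : Integrable g μ) (hg1 : Integrable (fun t ↦ t * g t) μ)
    (x : ℝ) :
    HasDerivAt (angularFourier μ g) (angularFourier μ (fun t ↦ -I * (t * g t)) x) x := by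
  refine (hasDerivAt_integral_of_dominated_loc_of_deriv_le
    (F' := fun s t ↦ cexp (-(I * t * s)) * (-I * (t * g t))) (bound := fun t ↦ ‖t * g t‖)
    Filter.univ_mem (.of_forall fun s ↦ (integrable_cexp_mul hg s).1) (integrable_cexp_mul hg x)
    (integrable_cexp_mul (hg1.const_mul _) x).1 (ae_of_all _ fun t s _ ↦ ?_) hg1.norm
    (ae_of_all _ fun t s _ ↦ ?_)).2
  · simp [norm_cexp_neg_I_mul_mul]
  · have h_inner : HasDerivAt (fun s : ℝ ↦ -(I * t * s)) (-(I * t)) s := by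
      simpa using ((hasDerivAt_id s).ofReal_comp.const_mul (I * t)).fun_neg
    exact (h_inner.cexp.mul_const (g t)).congr_deriv (by ring)

theorem norm_angularFourier_sub_le (hg : Integrable g μ) (hg1 : Integrable (fun t ↦ t * g t) μ)
    (a b : ℝ) :
    ‖angularFourier μ g a - angularFourier μ g b‖ ≤ (∫ t, ‖t * g t‖ ∂μ) * |a - b| := by
  have h_mvt := Convex.norm_image_sub_le_of_norm_hasDerivWithin_le (C := ∫ t, ‖t * g t‖ ∂μ)
    (fun s _ ↦ (hasDerivAt_angularFourier hg hg1 s).hasDerivWithinAt) (fun s _ ↦ ?_) convex_univ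
    (Set.mem_univ b) (Set.mem_univ a)
  · exact h_mvt
  · refine (norm_integral_le_integral_norm _).trans_eq ?_
    simp [norm_cexp_neg_I_mul_mul]

theorem two_mul_angularFourier_sub_sub (hg : Integrable g μ) (x y : ℝ) :
    2 * angularFourier μ g x - angularFourier μ g (x - y) - angularFourier μ g (x + y) =
      2 * ∫ t, (1 - Real.cos (t * y)) • (cexp (-(I * t * x)) * g t) ∂μ := by
  have h_int := integrable_cexp_mul hg
  simp only [angularFourier]
  rw [← integral_const_mul, ← integral_const_mul, ← integral_sub ((h_int x).const_mul 2) (h_int _),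
    ← integral_sub (((h_int x).const_mul 2).sub' (h_int _)) (h_int _)]
  refine integral_congr_ae (ae_of_all _ fun t ↦ ?_)
  have h_sub : cexp (-(I * t * ↑(x - y))) = cexp (-(I * t * x)) * cexp (t * y * I) := by
    rw [← Complex.exp_add]; push_cast; ring_nf
  have h_add : cexp (-(I * t * ↑(x + y))) = cexp (-(I * t * x)) * cexp (-(t * y) * I) := by
    rw [← Complex.exp_add]; push_cast; ring_nf
  simp only [h_sub, h_add]
  simp only [real_smul, ofReal_sub, ofReal_one, ofReal_cos, ofReal_mul]
  linear_combination cexp (-(I * t * x)) * g t * two_cos (t * y)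

theorem integrable_ofReal_mul_of_sq_smul (hg : Integrable g μ)
    (hg2 : Integrable (fun t ↦ t ^ 2 • g t) μ) : Integrable (fun t ↦ t * g t) μ := by
  refine (integrable_abs_rpow_smul zero_le_one one_le_two hg hg2).congr'
    (measurable_ofReal.aestronglyMeasurable.mul hg.1) (ae_of_all _ fun t ↦ ?_)
  simp

theorem hasDerivAt_secondDifference {u : ℝ → ℂ} (hu : Differentiable ℝ u) (x y : ℝ) :
    HasDerivAt (fun y ↦ 2 * u x - u (x - y) - u (x + y)) (deriv u (x - y) - deriv u (x + y)) y := by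
  have h_sub := (hu (x - y)).hasDerivAt.comp_const_sub x y
  have h_add := (hu (x + y)).hasDerivAt.comp_const_add x y
  simpa using (h_sub.const_sub (2 * u x)).fun_sub h_add

theorem norm_deriv_angularFourier_sub_le (hg : Integrable g μ)
    (hg2 : Integrable (fun t ↦ t ^ 2 • g t) μ) (a b : ℝ) :
    ‖deriv (angularFourier μ g) a - deriv (angularFourier μ g) b‖ ≤
      (∫ t, ‖t ^ 2 • g t‖ ∂μ) * |a - b| := by
  have hg1 := integrable_ofReal_mul_of_sq_smul hg hg2
  have h_eq (t : ℝ) : t * (-I * (t * g t)) = -I * t ^ 2 • g t := by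
    rw [real_smul]; push_cast; ring
  have h_norm (t : ℝ) : ‖t * (-I * (t * g t))‖ = ‖t ^ 2 • g t‖ := by
    rw [h_eq, norm_mul, norm_neg, norm_I, one_mul]
  have h_int : Integrable (fun t : ℝ ↦ t * (-I * (t * g t))) μ := by
    simpa only [h_eq] using hg2.const_mul (-I)
  rw [(hasDerivAt_angularFourier hg hg1 a).deriv, (hasDerivAt_angularFourier hg hg1 b).deriv]
  simpa only [h_norm] using norm_angularFourier_sub_le (hg1.const_mul (-I)) h_int a b

theorem integral_rpow_smul_secondDifference_angularFourier [SFinite μ] (hα0 : 0 < α)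
    (hα2 : α < 2) (hg : Integrable g μ) (hg2 : Integrable (fun t ↦ t ^ 2 • g t) μ) (x : ℝ) :
    ∫ y in Set.Ioi (0 : ℝ), y ^ (-1 - α) • (2 * angularFourier μ g x -
      angularFourier μ g (x - y) - angularFourier μ g (x + y)) =
      (2 * oneSubCosMoment α) • angularFourier μ (fun t ↦ |t| ^ α • g t) x := by
  have h_abs := integrable_cexp_mul (integrable_abs_rpow_smul hα0.le hα2.le hg hg2) x
  have h_comm (t : ℝ) : cexp (-(I * t * x)) * |t| ^ α • g t =
      |t| ^ α • (cexp (-(I * t * x)) * g t) := mul_smul_comm _ _ _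
  have h_two (y : ℝ) (z : ℂ) : y • (2 * z) = 2 * y • z := (mul_smul_comm _ _ _).symm
  simp only [two_mul_angularFourier_sub_sub hg, h_two, integral_const_mul]
  rw [integral_rpow_smul_integral_one_sub_cos_smul hα0 hα2 (integrable_cexp_mul hg x).1
    (by simpa only [h_comm] using h_abs)]
  simp only [angularFourier, h_comm]
  simp only [real_smul]
  push_cast
  ring

theorem integral_rpow_smul_deriv_angularFourier [SFinite μ] (hα0 : 0 < α) (hα2 : α < 2)
    (hg : Integrable g μ) (hg2 : Integrable (fun t ↦ t ^ 2 • g t) μ)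
    (h_deriv : Integrable (deriv (angularFourier μ g))) (x : ℝ) :
    IntegrableOn (fun y : ℝ ↦ y ^ (-α) •
      (deriv (angularFourier μ g) (x - y) - deriv (angularFourier μ g) (x + y))) (Set.Ioi 0) ∧
    ∫ y in Set.Ioi (0 : ℝ), y ^ (-α) •
      (deriv (angularFourier μ g) (x - y) - deriv (angularFourier μ g) (x + y)) =
      (2 * α * oneSubCosMoment α) • angularFourier μ (fun t ↦ |t| ^ α • g t) x := by
  have h_diff : Differentiable ℝ (angularFourier μ g) := fun s ↦
    (hasDerivAt_angularFourier hg (integrable_ofReal_mul_of_sq_smul hg hg2) s).differentiableAt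
  have h_int : IntegrableOn (fun y ↦ deriv (angularFourier μ g) (x - y) -
      deriv (angularFourier μ g) (x + y)) (Set.Ioi 0) :=
    ((h_deriv.comp_sub_left x).sub (h_deriv.comp_add_left x)).integrableOn
  have h_lip (y : ℝ) (hy : y ≥ 0) : ‖deriv (angularFourier μ g) (x - y) -
      deriv (angularFourier μ g) (x + y)‖ ≤ 2 * (∫ t, ‖t ^ 2 • g t‖ ∂μ) * y := by
    refine (norm_deriv_angularFourier_sub_le hg hg2 _ _).trans_eq ?_
    rw [show x - y - (x + y) = -(2 * y) by ring, abs_neg, abs_of_nonneg (by positivity)]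
    ring
  refine ⟨integrableOn_rpow_smul_of_norm_le_mul hα0 hα2 h_int fun y hy ↦ h_lip y hy.le, ?_⟩
  rw [integral_rpow_smul_deriv hα0 hα2 (hasDerivAt_secondDifference h_diff x) (by simp; ring)
    h_int h_lip, integral_rpow_smul_secondDifference_angularFourier hα0 hα2 hg hg2, smul_smul]
  ring_nf

end AngularFourier

section Normalisation

open Complex

theorem angularFourier_exp_neg_sq (x : ℝ) :
    angularFourier volume (fun t ↦ Real.exp (-t ^ 2)) x =
      ((√Real.pi * Real.exp (-(1 / 4) * x ^ 2) : ℝ) : ℂ) := by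
  have h_integrand (t : ℝ) : cexp (-(I * t * x)) * Real.exp (-t ^ 2) =
      cexp (I * -x * t) * cexp (-1 * t ^ 2) := by
    push_cast
    ring_nf
  have h_sqrt : (Real.pi : ℂ) ^ (1 / 2 : ℂ) = (√Real.pi : ℝ) := by
    rw [Real.sqrt_eq_rpow, ofReal_cpow Real.pi_pos.le]
    push_cast
    rfl
  simp only [angularFourier, h_integrand]
  rw [fourierIntegral_gaussian (by simp), div_one, h_sqrt]
  push_cast
  ring_nf

theorem deriv_angularFourier_exp_neg_sq (x : ℝ) :
    deriv (angularFourier volume (fun t ↦ Real.exp (-t ^ 2))) x =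
      ((-(√Real.pi / 2) * (x * Real.exp (-(1 / 4) * x ^ 2)) : ℝ) : ℂ) := by
  have h_sq : HasDerivAt (fun x : ℝ ↦ -(1 / 4) * x ^ 2) (-(1 / 4) * (2 * x)) x := by
    simpa using (hasDerivAt_pow 2 x).const_mul (-(1 / 4) : ℝ)
  rw [funext angularFourier_exp_neg_sq, (h_sq.exp.const_mul √Real.pi).ofReal_comp.deriv]
  congr 1
  ring

theorem angularFourier_abs_rpow_smul_exp_neg_sq_zero {p : ℝ} (hp : -1 < p) :
    angularFourier volume (fun t ↦ |t| ^ p • (Real.exp (-t ^ 2) : ℂ)) 0 =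
      (Real.Gamma ((p + 1) / 2) : ℂ) := by
  have h_gamma := integral_rpow_mul_exp_neg_mul_rpow two_pos hp one_pos
  simp only [Real.one_rpow, Real.rpow_two, neg_mul, one_mul] at h_gamma
  have h_even := integral_comp_abs (f := fun t ↦ t ^ p * Real.exp (-t ^ 2))
  simp only [sq_abs] at h_even
  have h_zero : angularFourier volume (fun t ↦ |t| ^ p • (Real.exp (-t ^ 2) : ℂ)) 0 =
      ∫ t : ℝ, ((|t| ^ p * Real.exp (-t ^ 2) : ℝ) : ℂ) := by
    simp [angularFourier]
  rw [h_zero, integral_complex_ofReal, h_even, h_gamma]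
  push_cast
  ring

theorem integral_rpow_mul_exp_neg_sq_div_four {p : ℝ} (hp : -1 < p) :
    ∫ y in Set.Ioi (0 : ℝ), y ^ p * Real.exp (-(1 / 4) * y ^ 2) =
      2 ^ p * Real.Gamma ((p + 1) / 2) := by
  have h_gamma := integral_rpow_mul_exp_neg_mul_rpow (b := 1 / 4) two_pos hp (by norm_num)
  simp only [Real.rpow_two] at h_gamma
  have h_four : (1 / 4 : ℝ) ^ (-(p + 1) / 2) = 2 ^ (p + 1) := by
    rw [show (1 / 4 : ℝ) = 2 ^ (-2 : ℝ) by norm_num [Real.rpow_neg], ← Real.rpow_mul two_pos.le]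
    ring_nf
  rw [h_gamma, h_four, Real.rpow_add_one two_ne_zero]
  ring

theorem integral_rpow_smul_deriv_angularFourier_exp_neg_sq {α : ℝ} (hα2 : α < 2) :
    ∫ y in Set.Ioi (0 : ℝ), y ^ (-α) •
      (deriv (angularFourier volume (fun t ↦ Real.exp (-t ^ 2))) (0 - y) -
        deriv (angularFourier volume (fun t ↦ Real.exp (-t ^ 2))) (0 + y)) =
      ((√Real.pi * (2 ^ (1 - α) * Real.Gamma (1 - α / 2)) : ℝ) : ℂ) := by
  have h_integrand : ∀ y ∈ Set.Ioi (0 : ℝ), y ^ (-α) •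
      (deriv (angularFourier volume (fun t ↦ Real.exp (-t ^ 2))) (0 - y) -
        deriv (angularFourier volume (fun t ↦ Real.exp (-t ^ 2))) (0 + y)) =
      ((√Real.pi * (y ^ (1 - α) * Real.exp (-(1 / 4) * y ^ 2)) : ℝ) : ℂ) := fun y hy ↦ by
    rw [deriv_angularFourier_exp_neg_sq, deriv_angularFourier_exp_neg_sq, sub_eq_add_neg 1 α,
      Real.rpow_add hy, Real.rpow_one, real_smul, zero_sub, zero_add, neg_sq]
    push_cast
    ring
  rw [setIntegral_congr_fun measurableSet_Ioi h_integrand, integral_complex_ofReal,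
    integral_const_mul, integral_rpow_mul_exp_neg_sq_div_four (by linarith),
    show (1 - α + 1) / 2 = 1 - α / 2 by ring]

theorem oneSubCosMoment_mul_Gamma {α : ℝ} (hα0 : 0 < α) (hα2 : α < 2) :
    2 * α * oneSubCosMoment α * Real.Gamma ((α + 1) / 2) =
      √Real.pi * (2 ^ (1 - α) * Real.Gamma (1 - α / 2)) := by
  have hg : Integrable (fun t : ℝ ↦ (Real.exp (-t ^ 2) : ℂ)) := by
    simpa using (integrable_exp_neg_mul_sq one_pos).ofReal (𝕜 := ℂ)
  have hg2 : Integrable (fun t : ℝ ↦ t ^ 2 • (Real.exp (-t ^ 2) : ℂ)) := by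
    simpa using (integrable_rpow_mul_exp_neg_mul_sq one_pos
      (s := 2) (by norm_num)).ofReal (𝕜 := ℂ)
  have h_deriv : Integrable (deriv (angularFourier volume (fun t ↦ Real.exp (-t ^ 2)))) := by
    rw [funext deriv_angularFourier_exp_neg_sq]
    exact ((integrable_mul_exp_neg_mul_sq (by norm_num)).const_mul _).ofReal
  have h_fourier := (integral_rpow_smul_deriv_angularFourier hα0 hα2 hg hg2 h_deriv 0).2
  rw [integral_rpow_smul_deriv_angularFourier_exp_neg_sq hα2,
    angularFourier_abs_rpow_smul_exp_neg_sq_zero (by linarith), real_smul, ← ofReal_mul,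
    ofReal_inj] at h_fourier
  exact h_fourier.symm

theorem cFrac_div_mul_oneSubCosMoment {α : ℝ} (hα0 : 0 < α) (hα2 : α < 2) :
    cFrac α / α * (2 * α * oneSubCosMoment α) = 1 := by
  have hΓ : 0 < Real.Gamma (1 - α / 2) := Real.Gamma_pos_of_pos (by linarith)
  have h_two : (2 : ℝ) ^ (α - 1) * 2 ^ (1 - α) = 1 := by
    rw [← Real.rpow_add two_pos, sub_add_sub_cancel', sub_self, Real.rpow_zero]
  have h_gamma := oneSubCosMoment_mul_Gamma hα0 hα2
  rw [cFrac, show 1 / 2 + α / 2 = (α + 1) / 2 by ring, div_div, div_mul_eq_mul_div,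
    div_eq_one_iff_eq (by positivity)]
  linear_combination α * 2 ^ (α - 1) * h_gamma + α * √Real.pi * Real.Gamma (1 - α / 2) * h_two

theorem hasFracLapAt_angularFourier {μ : Measure ℝ} [SFinite μ] {g : ℝ → ℂ} {α : ℝ} (hα0 : 0 < α)
    (hα2 : α < 2) (hg : Integrable g μ) (hg2 : Integrable (fun t ↦ t ^ 2 • g t) μ)
    (h_deriv : Integrable (deriv (angularFourier μ g))) (x : ℝ) :
    HasFracLapAt α (angularFourier μ g) (angularFourier μ (fun t ↦ |t| ^ α • g t) x) x := by
  obtain ⟨h_int, h_eq⟩ := integral_rpow_smul_deriv_angularFourier hα0 hα2 hg hg2 h_deriv x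
  refine ⟨fun s ↦ (hasDerivAt_angularFourier hg
    (integrable_ofReal_mul_of_sq_smul hg hg2) s).differentiableAt, h_int, ?_⟩
  rw [h_eq, smul_smul, cFrac_div_mul_oneSubCosMoment hα0 hα2, one_smul]

end Normalisation

section GammaIntegral

open Complex

theorem norm_cpow_mul_cexp_neg_mul (s z : ℂ) {t : ℝ} (ht : 0 < t) :
    ‖(t : ℂ) ^ (s - 1) * cexp (-(z * t))‖ = t ^ (s.re - 1) * Real.exp (-z.re * t) := by
  simp [norm_cpow_eq_rpow_re_of_pos ht, Complex.norm_exp]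

theorem aestronglyMeasurable_cpow_mul_cexp_neg_mul (s z : ℂ) :
    AEStronglyMeasurable (fun t : ℝ ↦ (t : ℂ) ^ (s - 1) * cexp (-(z * t)))
      (volume.restrict (Set.Ioi 0)) :=
  Measurable.aestronglyMeasurable (by fun_prop)

theorem integrableOn_cpow_mul_cexp_neg_mul {s z : ℂ} (hs : 0 < s.re) (hz : 0 < z.re) :
    IntegrableOn (fun t : ℝ ↦ (t : ℂ) ^ (s - 1) * cexp (-(z * t))) (Set.Ioi 0) := by
  have h_real : IntegrableOn (fun t : ℝ ↦ t ^ (s.re - 1) * Real.exp (-z.re * t)) (Set.Ioi 0) := by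
    simpa using integrableOn_rpow_mul_exp_neg_mul_rpow (s := s.re - 1) (by linarith) one_pos hz
  exact h_real.mono' (aestronglyMeasurable_cpow_mul_cexp_neg_mul s z)
    (ae_restrict_of_forall_mem measurableSet_Ioi fun t ht ↦ (norm_cpow_mul_cexp_neg_mul s z ht).le)

theorem differentiableOn_integral_cpow_mul_cexp_neg_mul {s : ℂ} (hs : 0 < s.re) :
    DifferentiableOn ℂ (fun z ↦ ∫ t in Set.Ioi (0 : ℝ), (t : ℂ) ^ (s - 1) * cexp (-(z * t)))
      {z | 0 < z.re} := by
  intro z (hz : 0 < z.re)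
  have h_bound : IntegrableOn (fun t : ℝ ↦ t ^ s.re * Real.exp (-(z.re / 2) * t)) (Set.Ioi 0) := by
    simpa using
      integrableOn_rpow_mul_exp_neg_mul_rpow (s := s.re) (by linarith) one_pos (half_pos hz)
  refine (hasDerivAt_integral_of_dominated_loc_of_deriv_le
    (F' := fun w t ↦ (t : ℂ) ^ (s - 1) * (cexp (-(w * t)) * -t))
    (Metric.ball_mem_nhds z (half_pos hz))
    (.of_forall fun w ↦ aestronglyMeasurable_cpow_mul_cexp_neg_mul s w)
    (integrableOn_cpow_mul_cexp_neg_mul hs hz) (Measurable.aestronglyMeasurable (by fun_prop))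
    (ae_restrict_of_forall_mem measurableSet_Ioi fun t ht w hw ↦ ?_) h_bound
    (ae_of_all _ fun t w _ ↦ ?_)).2.differentiableAt.differentiableWithinAt
  · have h_re : z.re / 2 ≤ w.re := by
      have := (abs_re_le_norm (w - z)).trans_lt (mem_ball_iff_norm.1 hw)
      rw [sub_re] at this
      linarith [(abs_lt.1 this).1]
    have ht0 : 0 < t := ht
    rw [← mul_assoc, norm_mul, norm_cpow_mul_cexp_neg_mul s w ht0, norm_neg, norm_real,
      Real.norm_of_nonneg ht0.le, mul_right_comm, ← Real.rpow_add_one ht0.ne', sub_add_cancel]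
    gcongr
  · have h_inner : HasDerivAt (fun w : ℂ ↦ -(w * t)) (-t) w := by
      simpa using ((hasDerivAt_id w).mul_const (t : ℂ)).fun_neg
    exact h_inner.cexp.const_mul _

theorem integral_cpow_mul_cexp_neg_mul_Ioi {s z : ℂ} (hs : 0 < s.re) (hz : 0 < z.re) :
    ∫ t in Set.Ioi (0 : ℝ), (t : ℂ) ^ (s - 1) * cexp (-(z * t)) = Gamma s * z ^ (-s) := by
  have h_open : IsOpen {w : ℂ | 0 < w.re} := isOpen_lt continuous_const continuous_re
  have h_lhs := (differentiableOn_integral_cpow_mul_cexp_neg_mul hs).analyticOnNhd h_open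
  have h_rhs : DifferentiableOn ℂ (fun w : ℂ ↦ Gamma s * w ^ (-s)) {w | 0 < w.re} := fun w hw ↦
    ((differentiableAt_id.cpow_const (.inl hw)).const_mul _).differentiableWithinAt
  have h_real {r : ℝ} (hr : 0 < r) :
      ∫ t in Set.Ioi (0 : ℝ), (t : ℂ) ^ (s - 1) * cexp (-(r * t)) = Gamma s * r ^ (-s) := by
    rw [Complex.integral_cpow_mul_exp_neg_mul_Ioi hs hr, one_div, mul_comm, cpow_neg,
      inv_cpow _ _ (by rw [arg_ofReal_of_nonneg hr.le]; exact Real.pi_ne_zero.symm)]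
  refine h_lhs.eqOn_of_preconnected_of_frequently_eq (h_rhs.analyticOnNhd h_open)
    (convex_halfSpace_re_gt 0).isPreconnected (z₀ := 1) (by simp) ?_ hz
  have h_tendsto : Filter.Tendsto ((↑) : ℝ → ℂ) (nhdsWithin 1 {1}ᶜ) (nhdsWithin 1 {1}ᶜ) :=
    tendsto_nhdsWithin_iff.2 ⟨continuous_ofReal.continuousWithinAt,
      eventually_mem_nhdsWithin.mono fun r hr ↦ by simpa using hr⟩
  exact h_tendsto.frequently
    ((lt_mem_nhds one_pos).filter_mono nhdsWithin_le_nhds |>.mono fun r ↦ h_real).frequently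

end GammaIntegral

section OneAddIMul

open Complex

theorem one_add_I_mul_mem_slitPlane (x : ℝ) : 1 + I * x ∈ slitPlane :=
  .inl (by simp)

theorem hasDerivAt_one_add_I_mul_cpow (w : ℂ) (x : ℝ) :
    HasDerivAt (fun x : ℝ ↦ (1 + I * x) ^ w) (w * (1 + I * x) ^ (w - 1) * I) x := by
  have h_affine : HasDerivAt (fun x : ℝ ↦ 1 + I * (x : ℂ)) I x := by
    simpa using (ofRealCLM.hasDerivAt.const_mul I).const_add 1
  exact (hasStrictDerivAt_cpow_const (one_add_I_mul_mem_slitPlane x)).hasDerivAt.comp x h_affine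

theorem norm_one_add_I_mul (x : ℝ) : ‖1 + I * x‖ = √(1 + x ^ 2) := by
  rw [mul_comm, ← ofReal_one, norm_add_mul_I, one_pow]

theorem integrable_one_add_I_mul_cpow {w : ℂ} (hw : w.re < -1) :
    Integrable (fun x : ℝ ↦ (1 + I * x) ^ w) := by
  have h_majorant : Integrable fun x : ℝ ↦ (1 + ‖x‖ ^ 2) ^ (-(-w.re) / 2) :=
    integrable_rpow_neg_one_add_norm_sq (by simpa using by linarith)
  refine (h_majorant.mul_const (Real.exp (Real.pi * |w.im|))).mono'
    (Measurable.aestronglyMeasurable (by fun_prop)) (.of_forall fun x ↦ ?_)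
  have h_arg : -(arg (1 + I * x) * w.im) ≤ Real.pi * |w.im| := by
    grw [neg_le_abs, abs_mul, abs_arg_le_pi]
  rw [norm_cpow_of_ne_zero (slitPlane_ne_zero (one_add_I_mul_mem_slitPlane x)), div_eq_mul_inv,
    ← Real.exp_neg, norm_one_add_I_mul, Real.sqrt_eq_rpow, ← Real.rpow_mul (by positivity),
    Real.norm_eq_abs, sq_abs, neg_neg, one_div, inv_mul_eq_div]
  gcongr

theorem angularFourier_cpow_mul_cexp_neg {s : ℂ} (hs : 0 < s.re) (x : ℝ) :
    angularFourier (volume.restrict (Set.Ioi 0)) (fun t ↦ (t : ℂ) ^ (s - 1) * cexp (-t)) x =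
      Gamma s * (1 + I * x) ^ (-s) := by
  rw [← integral_cpow_mul_cexp_neg_mul_Ioi hs (by simp), angularFourier]
  refine integral_congr_ae (.of_forall fun t ↦ ?_)
  simp only
  rw [mul_left_comm, ← Complex.exp_add]
  ring_nf

theorem hasFracLapAt_one_add_I_mul_cpow_neg {α : ℝ} (hα0 : 0 < α) (hα2 : α < 2) {s : ℂ}
    (hs : 0 < s.re) (x : ℝ) :
    HasFracLapAt α (fun x : ℝ ↦ (1 + I * x) ^ (-s))
      (Gamma (s + α) / Gamma s * (1 + I * x) ^ (-(s + α))) x := by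
  set g : ℂ → ℝ → ℂ := fun s t ↦ (t : ℂ) ^ (s - 1) * cexp (-t)
  set μ : Measure ℝ := volume.restrict (Set.Ioi 0)
  have h_integrable {s : ℂ} (hs : 0 < s.re) : Integrable (g s) μ := by
    simpa [IntegrableOn] using integrableOn_cpow_mul_cexp_neg_mul hs (z := 1) (by simp)
  have h_rpow_smul (r : ℝ) : (fun t : ℝ ↦ |t| ^ r • g s t) =ᵐ[μ] g (s + r) :=
    ae_restrict_of_forall_mem measurableSet_Ioi fun t (ht : 0 < t) ↦ by
      simp only [g]
      rw [real_smul, abs_of_pos ht, ofReal_cpow ht.le, ← mul_assoc,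
        ← cpow_add _ _ (ofReal_ne_zero.2 ht.ne'), ← add_sub_assoc, add_comm]
  have h_integrable_sq : Integrable (fun t ↦ t ^ 2 • g s t) μ := by
    simpa using (h_integrable (by simpa using by positivity)).congr (h_rpow_smul 2).symm
  have h_transform : angularFourier μ (g s) = fun x : ℝ ↦ Gamma s * (1 + I * x) ^ (-s) :=
    funext (angularFourier_cpow_mul_cexp_neg hs)
  have h_deriv : Integrable (deriv (angularFourier μ (g s))) := by
    rw [h_transform, funext fun x ↦
      ((hasDerivAt_one_add_I_mul_cpow (-s) x).const_mul (Gamma s)).deriv]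
    have h_re : (-s - 1).re < -1 := by rw [sub_re, neg_re, one_re]; linarith
    exact (((integrable_one_add_I_mul_cpow h_re).const_mul _).mul_const _).const_mul _
  have h_main := hasFracLapAt_angularFourier hα0 hα2 (h_integrable hs) h_integrable_sq h_deriv x
  have h_value : angularFourier μ (fun t ↦ |t| ^ α • g s t) x =
      Gamma (s + α) * (1 + I * x) ^ (-(s + α)) := by
    rw [← angularFourier_cpow_mul_cexp_neg (by simpa using by positivity)]
    exact integral_congr_ae ((h_rpow_smul α).mono fun t ht ↦ by simp only [ht, g])
  rw [h_transform, h_value] at h_main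
  have h_gamma : Gamma s ≠ 0 := Gamma_ne_zero_of_re_pos hs
  simpa [h_gamma, div_eq_inv_mul, mul_assoc] using h_main.const_mul (Gamma s)⁻¹

end OneAddIMul

section Christov

open Complex

theorem christov_eq_sum (n : ℕ) (x : ℝ) :
    christov n x =
      ∑ k ∈ range (n + 1), (n.choose k * (-2) ^ k : ℂ) * (1 + I * x) ^ (-(k + 1) : ℂ) := by
  have h_ne : 1 + I * (x : ℂ) ≠ 0 := slitPlane_ne_zero (one_add_I_mul_mem_slitPlane x)
  have h_num : I * (x : ℂ) - 1 = -2 + (1 + I * x) := by ring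
  rw [christov, h_num, add_comm (I * (x : ℂ)) 1, zpow_natCast, ← Nat.cast_succ, zpow_natCast,
    add_pow, sum_div]
  refine sum_congr rfl fun k hk ↦ ?_
  have h_succ : n.succ = n - k + (k + 1) := by grind
  rw [h_succ, pow_add, cpow_neg, ← Nat.cast_add_one, cpow_natCast]
  field_simp

theorem gbinomR_natCast (n k : ℕ) : gbinomR n k = n.choose k := by
  rw [gbinomR, ← descPochhammer_eval_eq_prod_range, Nat.cast_choose_eq_descPochhammer_div]

theorem Gamma_mul_gbinomR_neg_one_sub {α : ℝ} (hα : -1 < α) (k : ℕ) :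
    Real.Gamma (1 + α) * gbinomR (-1 - α) k =
      (-1) ^ k * (Real.Gamma (k + 1 + α) / Real.Gamma (k + 1)) := by
  rw [gbinomR, Real.Gamma_nat_eq_factorial]
  induction k with
  | zero => simp
  | succ k ih =>
    have h_pos : (0 : ℝ) < k + 1 + α := by linarith [k.cast_nonneg (α := ℝ)]
    have h_gamma : Real.Gamma ((k + 1 : ℕ) + 1 + α) = (k + 1 + α) * Real.Gamma (k + 1 + α) := by
      rw [← Real.Gamma_add_one h_pos.ne']
      congr 1
      push_cast
      ring
    rw [h_gamma, prod_range_succ, Nat.factorial_succ]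
    field_simp at ih ⊢
    linear_combination ((-1 - α) - k) * ih

/-- `C(n, k) C(n - k, l - k) = C(n, l) C(l, k)`, summed over `k ≤ l ≤ n`. -/
theorem sum_choose_mul_one_add_pow {R : Type*} [CommSemiring R] (n : ℕ) (a : ℕ → R) (z : R) :
    ∑ k ∈ range (n + 1), n.choose k * a k * (1 + z) ^ (n - k) =
      ∑ l ∈ range (n + 1), n.choose l * (∑ k ∈ range (l + 1), l.choose k * a k) * z ^ (n - l) := by
  have h_expand {k : ℕ} (hk : k ∈ range (n + 1)) : n.choose k * a k * (1 + z) ^ (n - k) =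
      ∑ l ∈ Ico k (n + 1), n.choose l * (l.choose k * a k) * z ^ (n - l) := by
    have hkn : k ≤ n := mem_range_succ_iff.1 hk
    rw [add_pow, mul_sum, sum_Ico_eq_sum_range, Nat.sub_add_comm hkn]
    refine sum_congr rfl fun j _ ↦ ?_
    have h_choose := congrArg (Nat.cast (R := R)) (Nat.choose_mul (n := n) (Nat.le_add_right k j))
    rw [Nat.add_sub_cancel_left, Nat.cast_mul, Nat.cast_mul] at h_choose
    calc n.choose k * a k * (1 ^ j * z ^ (n - k - j) * (n - k).choose j)
      _ = (n.choose k * (n - k).choose j) * (z ^ (n - k - j) * a k) := by ring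
      _ = n.choose (k + j) * ((k + j).choose k * a k) * z ^ (n - (k + j)) := by
        rw [← h_choose, Nat.sub_sub]
        ring
  simp_rw [mul_sum, sum_mul]
  rw [sum_congr rfl fun k ↦ h_expand]
  exact sum_comm' fun k l ↦ by simp only [mem_range, mem_Ico]; omega

theorem sum_range_succ_eq_sum_even_add_sum_odd {M : Type*} [AddCommMonoid M] (n : ℕ) (f : ℕ → M) :
    ∑ l ∈ range (n + 1), f l =
      ∑ l ∈ range (n + 1) with 2 * l ≤ n, f (2 * l) +
        ∑ l ∈ range (n + 1) with 2 * l + 1 ≤ n, f (2 * l + 1) := by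
  rw [← sum_filter_add_sum_filter_not _ Even]
  congr 1
  · exact sum_nbij' (· / 2) (2 * ·) (by grind) (by grind) (by grind) (by grind) (by grind)
  · exact sum_nbij' (· / 2) (2 * · + 1) (by grind) (by grind) (by grind) (by grind) (by grind)

theorem ofReal_HR (α : ℝ) (l : ℕ) :
    (HR α l : ℂ) = ∑ k ∈ range (l + 1), l.choose k * ((gbinomR (-1 - α) k * 2 ^ k : ℝ) : ℂ) := by
  simp [HR, gbinomR_natCast, mul_assoc]

theorem hasFracLapAt_christov {α : ℝ} (hα0 : 0 < α) (hα2 : α < 2) (n : ℕ) (x : ℝ) :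
    HasFracLapAt α (christov n)
      (Real.Gamma (1 + α) * ((1 + I * x) ^ (-(n + 1 + α) : ℂ) *
        ∑ l ∈ range (n + 1), (gbinomR n l * HR α l : ℝ) * (I * x) ^ (n - l))) x := by
  have h_sum := HasFracLapAt.fun_sum (s := range (n + 1)) fun k _ ↦
    (hasFracLapAt_one_add_I_mul_cpow_neg hα0 hα2 (s := k + 1) (by simpa using by positivity)
      x).const_mul (n.choose k * (-2) ^ k)
  convert h_sum using 1
  · exact funext (christov_eq_sum n)
  simp_rw [ofReal_mul, gbinomR_natCast, ofReal_natCast, ofReal_HR]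
  rw [← sum_choose_mul_one_add_pow, ← mul_assoc, mul_sum]
  refine sum_congr rfl fun k hk ↦ ?_
  have h_cpow : (1 + I * (x : ℂ)) ^ (-(k + 1 + α) : ℂ) =
      (1 + I * x) ^ (-(n + 1 + α) : ℂ) * (1 + I * x) ^ (n - k) := by
    rw [← cpow_natCast, ← cpow_add _ _ (slitPlane_ne_zero (one_add_I_mul_mem_slitPlane x)),
      Nat.cast_sub (mem_range_succ_iff.1 hk)]
    ring_nf
  have h_coeff : (Real.Gamma (1 + α) : ℂ) * gbinomR (-1 - α) k =
      (-1) ^ k * (Gamma (k + 1 + α) / Gamma (k + 1)) := by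
    simpa [← Gamma_ofReal] using congrArg ofReal (Gamma_mul_gbinomR_neg_one_sub (by linarith) k)
  rw [h_cpow, neg_pow]
  push_cast
  linear_combination (n.choose k * 2 ^ k * (1 + I * x) ^ (-(n + 1 + α) : ℂ) *
    (1 + I * x) ^ (n - k)) * h_coeff

theorem one_add_I_mul_cpow_ofReal (x s : ℝ) :
    (1 + I * x) ^ (s : ℂ) =
      ((1 + x ^ 2) ^ (s / 2) : ℝ) * cexp ((s * Real.arctan x : ℝ) * I) := by
  have h_arg : arg (1 + I * x) = Real.arctan x := by
    rw [arg_of_re_nonneg (by simp), norm_one_add_I_mul, Real.arctan_eq_arcsin]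
    simp
  rw [cpow_ofReal, h_arg, norm_one_add_I_mul, Real.sqrt_eq_rpow, ← Real.rpow_mul (by positivity),
    exp_ofReal_mul_I, one_div_mul_eq_div, mul_comm s]

theorem neg_I_pow_mul_sum_I_mul_pow (n : ℕ) (c : ℕ → ℂ) (x : ℂ) :
    (-I) ^ (n + 1) * ∑ l ∈ range (n + 1), c l * (I * x) ^ (n - l) =
      -I * ∑ l ∈ range (n + 1) with 2 * l ≤ n, (-1) ^ l * c (2 * l) * x ^ (n - 2 * l) -
        ∑ l ∈ range (n + 1) with 2 * l + 1 ≤ n,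
          (-1) ^ l * c (2 * l + 1) * x ^ (n - 1 - 2 * l) := by
  have h_term {l : ℕ} (hl : l ≤ n) :
      (-I) ^ (n + 1) * (c l * (I * x) ^ (n - l)) = (-I) ^ (l + 1) * c l * x ^ (n - l) := by
    have h_pow : (-I) ^ (n + 1) * I ^ (n - l) = (-I) ^ (l + 1) := by
      have h_succ : n + 1 = l + 1 + (n - l) := by omega
      rw [h_succ, pow_add, mul_assoc, ← mul_pow]
      simp
    rw [mul_pow, ← h_pow]
    ring
  rw [sum_range_succ_eq_sum_even_add_sum_odd, mul_add, mul_sum, mul_sum, mul_sum, sub_eq_add_neg,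
    ← sum_neg_distrib]
  congr 1 <;> refine sum_congr rfl fun l hl ↦ ?_
  · rw [h_term (mem_filter.1 hl).2, pow_succ, pow_mul, neg_sq, I_sq]
    ring
  · rw [h_term (mem_filter.1 hl).2, show 2 * l + 1 + 1 = 2 * (l + 1) by ring, pow_mul, neg_sq,
      I_sq, Nat.sub_right_comm, Nat.sub_sub]
    ring

theorem one_add_I_mul_cpow_neg_eq_arccot (α : ℝ) (n : ℕ) (x : ℝ) :
    (1 + I * x) ^ (-(n + 1 + α) : ℂ) =
      (((1 + x ^ 2) ^ ((n + 1 + α) / 2))⁻¹ : ℝ) *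
        (cexp (((n + 1 + α) * arccot x - Real.pi * α / 2 : ℝ) * I) * (-I) ^ (n + 1)) := by
  have h_neg_I : (-I) ^ (n + 1) = cexp ((n + 1 : ℕ) * (-(Real.pi / 2 * I))) := by
    rw [Complex.exp_nat_mul, Complex.exp_neg, exp_pi_div_two_mul_I, inv_I]
  have h_cast : (-(n + 1 + α) : ℂ) = (-(n + 1 + α) : ℝ) := by push_cast; rfl
  rw [h_cast, one_add_I_mul_cpow_ofReal, neg_div, Real.rpow_neg (by positivity), h_neg_I,
    ← Complex.exp_add, arccot]
  push_cast
  ring_nf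

theorem re_one_add_I_mul_cpow_mul_sum (α : ℝ) (n : ℕ) (c : ℕ → ℝ) (x : ℝ) :
    ((1 + I * x) ^ (-(n + 1 + α) : ℂ) * ∑ l ∈ range (n + 1), c l * (I * x) ^ (n - l)).re =
      ((1 + x ^ 2) ^ ((n + 1 + α) / 2))⁻¹ *
        (Real.sin ((n + 1 + α) * arccot x - Real.pi * α / 2) *
            ∑ l ∈ range (n + 1) with 2 * l ≤ n, (-1) ^ l * c (2 * l) * x ^ (n - 2 * l) -
          Real.cos ((n + 1 + α) * arccot x - Real.pi * α / 2) *
            ∑ l ∈ range (n + 1) with 2 * l + 1 ≤ n,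
              (-1) ^ l * c (2 * l + 1) * x ^ (n - 1 - 2 * l)) := by
  have h_re (θ S T : ℝ) :
      (cexp (θ * I) * (-I * S - T)).re = Real.sin θ * S - Real.cos θ * T := by
    simp [exp_ofReal_mul_I_re, exp_ofReal_mul_I_im, neg_add_eq_sub]
  rw [one_add_I_mul_cpow_neg_eq_arccot, mul_assoc, mul_assoc, neg_I_pow_mul_sum_I_mul_pow,
    re_ofReal_mul, ← h_re]
  push_cast
  rfl

end Christov

theorem fracLap_CC (α : ℝ) (hα : α ∈ Set.Ioo (0 : ℝ) 2) (n : ℕ) (x : ℝ) :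
    IntegrableOn (fun y : ℝ => (CC' n (x - y) - CC' n (x + y)) * y ^ (-α)) (Set.Ioi 0) ∧
    (cFrac α / α) * ∫ y in Set.Ioi (0 : ℝ), (CC' n (x - y) - CC' n (x + y)) * y ^ (-α) =
      (Real.Gamma (1 + α) / (1 + x ^ 2) ^ (((n : ℝ) + 1 + α) / 2)) *
          Real.sin (((n : ℝ) + 1 + α) * arccot x - Real.pi * α / 2) *
          ∑ l ∈ (Finset.range (n + 1)).filter (fun l => 2 * l ≤ n),
            (-1 : ℝ) ^ l * gbinomR (n : ℝ) (2 * l) * x ^ (n - 2 * l) * HR α (2 * l)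
        - (Real.Gamma (1 + α) / (1 + x ^ 2) ^ (((n : ℝ) + 1 + α) / 2)) *
          Real.cos (((n : ℝ) + 1 + α) * arccot x - Real.pi * α / 2) *
          ∑ l ∈ (Finset.range (n + 1)).filter (fun l => 2 * l + 1 ≤ n),
            (-1 : ℝ) ^ l * gbinomR (n : ℝ) (2 * l + 1) * x ^ (n - 1 - 2 * l) *
              HR α (2 * l + 1) := by
  obtain ⟨hα0, hα2⟩ := hα
  have h := (hasFracLapAt_christov hα0 hα2 n x).clm_comp Complex.reCLM
  have h_integrand : (fun y ↦ (CC' n (x - y) - CC' n (x + y)) * y ^ (-α)) =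
      fun y ↦ y ^ (-α) • (deriv (CC n) (x - y) - deriv (CC n) (x + y)) :=
    funext fun _ ↦ mul_comm _ _
  rw [h_integrand]
  refine ⟨h.integrableOn, h.integral_eq.trans ?_⟩
  have h_comm (a b c d : ℝ) : a * (b * c) * d = a * b * d * c := by ring
  rw [Complex.reCLM_apply, Complex.re_ofReal_mul, re_one_add_I_mul_cpow_mul_sum]
  simp only [h_comm]
  ring
end

section
/- Let α ∈ (0,2), n ∈ ℕ with n ≥ 1, and x ∈ ℝ. Define h : ℂ → ℂ by h(z) = z^(−α)·(z − x − i)^(n−1), using the principal branch for z^(−α). Then the n-th complex derivative of h at the point z = x − i satisfies (1/n!)·h^(n)(x−i) = ∑_{k=1}^{n} C(n−1,k−1)·C(−α,k)·(x−i)^(−α−k)·(−2i)^(k−1). (Up to a sign, this is the residue of the integrand g_n at its pole z = x−i in the contour-integral computation of the fractional Laplacian of λ_n.) -/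
open MeasureTheory Finset

/-! By the Leibniz rule, Taylor coefficients multiply like power series. The coefficient of order
`n - k` of `(z - c) ^ (n - 1)` at `w` is `C(n-1, n-k) (w - c) ^ (k - 1)`, which vanishes for `k = 0`
and in which `C(n-1, n-k) = C(n-1, k-1)` otherwise; the coefficient of order `k` of `z ^ a` is
`C(a, k) w ^ (a - k)`. Here `a = -α`, `c = x + i` and `w = x - i`, so `w - c = -2i`. -/

section TaylorCoefficients

variable {𝕜 : Type*} [NontriviallyNormedField 𝕜] [CharZero 𝕜]

lemma iteratedDeriv_fun_mul_div_factorial {n : ℕ} {f g : 𝕜 → 𝕜} {w : 𝕜}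
    (hf : ContDiffAt 𝕜 n f w) (hg : ContDiffAt 𝕜 n g w) :
    iteratedDeriv n (fun z ↦ f z * g z) w / n.factorial =
      ∑ k ∈ range (n + 1), iteratedDeriv k f w / k.factorial *
        (iteratedDeriv (n - k) g w / (n - k).factorial) := by
  rw [iteratedDeriv_fun_mul hf hg, sum_div]
  refine sum_congr rfl fun k hk ↦ ?_
  rw [Nat.cast_choose 𝕜 (mem_range_succ_iff.mp hk)]
  field_simp [Nat.factorial_ne_zero]

lemma iteratedDeriv_sub_const_pow_div_factorial (m j : ℕ) (c w : 𝕜) :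
    iteratedDeriv j (fun z ↦ (z - c) ^ m) w / j.factorial = m.choose j * (w - c) ^ (m - j) := by
  simp only [iteratedDeriv_comp_sub_const j (· ^ m) c, iteratedDeriv_pow,
    Nat.descFactorial_eq_factorial_mul_choose, Nat.cast_mul]
  field_simp [Nat.factorial_ne_zero]

lemma iteratedDeriv_mul_sub_const_pow_div_factorial {n : ℕ} {f : 𝕜 → 𝕜} {w : 𝕜}
    (hf : ContDiffAt 𝕜 n f w) (m : ℕ) (c : 𝕜) :
    iteratedDeriv n (fun z ↦ f z * (z - c) ^ m) w / n.factorial =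
      ∑ k ∈ range (n + 1), iteratedDeriv k f w / k.factorial *
        (m.choose (n - k) * (w - c) ^ (m - (n - k))) := by
  simp only [iteratedDeriv_fun_mul_div_factorial (g := fun z ↦ (z - c) ^ m) hf (by fun_prop),
    iteratedDeriv_sub_const_pow_div_factorial]

lemma iteratedDeriv_mul_sub_const_pow_pred_div_factorial {n : ℕ} (hn : 1 ≤ n) {f : 𝕜 → 𝕜} {w : 𝕜}
    (hf : ContDiffAt 𝕜 n f w) (c : 𝕜) :
    iteratedDeriv n (fun z ↦ f z * (z - c) ^ (n - 1)) w / n.factorial =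
      ∑ k ∈ Icc 1 n, (n - 1).choose (k - 1) * (iteratedDeriv k f w / k.factorial) *
        (w - c) ^ (k - 1) := by
  have choose_eq_zero : (n - 1).choose n = 0 := Nat.choose_eq_zero_of_lt (by lia)
  rw [iteratedDeriv_mul_sub_const_pow_div_factorial hf, sum_range_eq_add_Ico _ (by lia),
    Nat.sub_zero, choose_eq_zero, Nat.cast_zero, zero_mul, mul_zero, zero_add,
    Ico_add_one_right_eq_Icc]
  refine sum_congr rfl fun k hk ↦ ?_
  obtain ⟨hk₁, hkn⟩ := mem_Icc.mp hk
  have choose_symm : (n - 1).choose (n - k) = (n - 1).choose (k - 1) :=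
    Nat.choose_symm_of_eq_add (by lia)
  have exponent_eq : n - 1 - (n - k) = k - 1 := by lia
  rw [choose_symm, exponent_eq]
  ring

end TaylorCoefficients

lemma gbinom_eq_eval_descPochhammer_div_factorial (a : ℂ) (k : ℕ) :
    gbinom a k = (descPochhammer ℂ k).eval a / k.factorial := by
  rw [gbinom, descPochhammer_eval_eq_prod_range]

lemma gbinom_natCast_s10 (m k : ℕ) : gbinom m k = m.choose k := by
  rw [gbinom_eq_eval_descPochhammer_div_factorial, descPochhammer_eval_eq_descFactorial,
    Nat.descFactorial_eq_factorial_mul_choose, Nat.cast_mul,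
    mul_div_cancel_left₀ _ (Nat.cast_ne_zero.mpr k.factorial_ne_zero)]

lemma contDiffAt_cpow_const_of_mem_slitPlane (a : ℂ) {w : ℂ} (hw : w ∈ Complex.slitPlane)
    {n : WithTop ℕ∞} : ContDiffAt ℂ n (fun z : ℂ ↦ z ^ a) w :=
  (analyticAt_id.cpow analyticAt_const hw).contDiffAt

lemma iteratedDeriv_cpow_const (a : ℂ) (k : ℕ) {w : ℂ} (hw : w ∈ Complex.slitPlane) :
    iteratedDeriv k (fun z : ℂ ↦ z ^ a) w =
      (descPochhammer ℂ k).eval a * w ^ (a - k) := by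
  induction k generalizing w with
  | zero => simp
  | succ k ih =>
    have eventually_ih : iteratedDeriv k (fun z : ℂ ↦ z ^ a) =ᶠ[nhds w]
        fun z ↦ (descPochhammer ℂ k).eval a * z ^ (a - k) :=
      Filter.eventually_of_mem (Complex.isOpen_slitPlane.mem_nhds hw) fun _ hz ↦ ih hz
    have deriv_cpow : deriv (fun z : ℂ ↦ z ^ (a - k)) w = (a - k) * w ^ (a - k - 1) := by
      simpa using deriv_cpow_const (c := a - k) differentiableAt_id hw
    rw [iteratedDeriv_succ, eventually_ih.deriv_eq, deriv_const_mul_field, deriv_cpow,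
      descPochhammer_succ_eval, mul_assoc, Nat.cast_succ, sub_add_eq_sub_sub]

lemma iteratedDeriv_cpow_const_div_factorial (a : ℂ) (k : ℕ) {w : ℂ}
    (hw : w ∈ Complex.slitPlane) :
    iteratedDeriv k (fun z : ℂ ↦ z ^ a) w / k.factorial = gbinom a k * w ^ (a - k) := by
  rw [iteratedDeriv_cpow_const a k hw, gbinom_eq_eval_descPochhammer_div_factorial,
    div_mul_eq_mul_div]

theorem residue_at_x_sub_i_general (a c : ℂ) {w : ℂ} (hw : w ∈ Complex.slitPlane) {n : ℕ}
    (hn : 1 ≤ n) :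
    1 / (n.factorial : ℂ) * iteratedDeriv n (fun z : ℂ ↦ z ^ a * (z - c) ^ (n - 1)) w =
      ∑ k ∈ Icc 1 n,
        gbinom ((n : ℂ) - 1) (k - 1) * gbinom a k * w ^ (a - k) * (w - c) ^ (k - 1) := by
  have gbinom_pred (j : ℕ) : gbinom ((n : ℂ) - 1) j = (n - 1).choose j := by
    rw [← Nat.cast_pred hn, gbinom_natCast_s10]
  rw [one_div_mul_eq_div, iteratedDeriv_mul_sub_const_pow_pred_div_factorial hn
    (contDiffAt_cpow_const_of_mem_slitPlane a hw)]
  simp only [iteratedDeriv_cpow_const_div_factorial a _ hw, gbinom_pred, mul_assoc]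

theorem residue_at_x_sub_i (α : ℝ) (hα : α ∈ Set.Ioo (0 : ℝ) 2) (n : ℕ) (hn : 1 ≤ n) (x : ℝ) :
    (1 / (n.factorial : ℂ)) *
        iteratedDeriv n
          (fun z : ℂ => z ^ (-(α : ℂ)) * (z - (x : ℂ) - Complex.I) ^ (n - 1))
          ((x : ℂ) - Complex.I) =
      ∑ k ∈ Finset.Icc 1 n,
        gbinom ((n : ℂ) - 1) (k - 1) * gbinom (-(α : ℂ)) k *
          ((x : ℂ) - Complex.I) ^ (-(α : ℂ) - (k : ℂ)) * (-(2 * Complex.I)) ^ (k - 1) := by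
  have mem_slitPlane : (x : ℂ) - Complex.I ∈ Complex.slitPlane :=
    Complex.mem_slitPlane_iff.mpr (.inr (by simp))
  have pole_sub_zero : (x : ℂ) - Complex.I - (x + Complex.I) = -(2 * Complex.I) := by ring
  simpa only [sub_sub, pole_sub_zero] using
    residue_at_x_sub_i_general (-(α : ℂ)) (x + Complex.I) mem_slitPlane hn
end
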